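/- Poincaré–Miranda theorem: Let f_1,…,f_r : [0,1]^r → ℝ be continuous functions such that for all i, x_i = 0 implies f_i(x) ≤ 0 and x_i = 1 implies f_i(x) ≥ 0. Then there exists a point x ∈ [0,1]^r with f_i(x) = 0 for all i. -/

import Mathlib

/-!
Fix a fine grid on the box and let `l i` be the function with values in `ZMod 2` on the grid points
that records the sign of `f i - c i`, adjusted to be `0` where `x i` is minimal and `1` where it is
maximal. The cup product of the mod 2 coboundaries `d(l i)` sums to `1` over the unit cubes of the
grid. Indeed it is the coboundary of the first `l i` times the product of the other `d(l j)`, so by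
Stokes it is a sum over faces of the grid. On the two faces in a direction `j ≠ i` the function
`l j` is constant, and on the lower face in direction `i` the factor `l i` vanishes; what remains
is the same sum with one factor fewer on the upper face. Hence the cup product is nonzero on some
unit cube, every `l i` takes both values among the vertices of that cube, and compactness yields a
common solution of `f i x = c i` as the mesh tends to zero.
-/

open Finset Filter Topology

section Lattice

variable {ι R : Type*} [DecidableEq ι]

/-- The vertices of the unit cube with lowest vertex `p` and edge directions `S`. -/
def cubeVertices (p : ι → ℕ) (S : Finset ι) : Set (ι → ℕ) :=
  Set.Icc p (p + ∑ i ∈ S, Pi.single i 1)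

section CubeVertices

variable {p : ι → ℕ} {S : Finset ι} {i : ι}

lemma self_mem_cubeVertices (p : ι → ℕ) (S : Finset ι) : p ∈ cubeVertices p S :=
  Set.left_mem_Icc.2 le_self_add

lemma cubeVertices_add_single_erase_subset (hi : i ∈ S) :
    cubeVertices (p + Pi.single i 1) (S.erase i) ⊆ cubeVertices p S := by
  rw [cubeVertices, add_assoc, add_sum_erase S (fun j => Pi.single j 1) hi]
  exact Set.Icc_subset_Icc_left le_self_add

lemma add_single_mem_cubeVertices (hi : i ∈ S) : p + Pi.single i 1 ∈ cubeVertices p S :=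
  cubeVertices_add_single_erase_subset hi (self_mem_cubeVertices _ _)

lemma apply_eq_of_mem_cubeVertices {u : ι → ℕ} (hu : u ∈ cubeVertices p S) (hi : i ∉ S) :
    u i = p i := by
  refine le_antisymm ((hu.2 i).trans_eq ?_) (hu.1 i)
  simp [Finset.sum_apply, hi]

lemma cubeVertices_univ [Fintype ι] (p : ι → ℕ) : cubeVertices p univ = Set.Icc p (p + 1) :=
  congrArg (fun q => Set.Icc p (p + q)) (univ_sum_single 1)

end CubeVertices

lemma sum_sum_erase_eq_zero_of_symm [Semiring R] [CharP R 2] (S : Finset ι) (F : ι → ι → R)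
    (hF : ∀ i j, F i j = F j i) : ∑ i ∈ S, ∑ j ∈ S.erase i, F i j = 0 := by
  rw [sum_sigma']
  refine sum_involution (fun x _ => ⟨x.2, x.1⟩) ?_ ?_ ?_ fun _ _ => rfl
  · rintro ⟨i, j⟩ -
    rw [hF j i, CharTwo.add_self_eq_zero]
  · rintro ⟨i, j⟩ hij - heq
    simp_all
  · rintro ⟨i, j⟩ hij
    simp_all [eq_comm]

section GridSums

variable [Fintype ι]

lemma mem_piFinset_update_singleton {α : ι → Type*} {s : ∀ i, Finset (α i)} {i : ι} {k : α i}
    {p : ∀ i, α i} :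
    p ∈ Fintype.piFinset (Function.update s i {k}) ↔ p i = k ∧ ∀ j ≠ i, p j ∈ s j := by
  rw [Fintype.mem_piFinset, Function.forall_update_iff s fun j t => p j ∈ t, mem_singleton]

lemma sum_piFinset_eq_sum_sum_update {α : ι → Type*} [AddCommMonoid R]
    (s : ∀ i, Finset (α i)) (i : ι) (F : (∀ i, α i) → R) :
    ∑ p ∈ Fintype.piFinset s, F p =
      ∑ k ∈ s i, ∑ p ∈ Fintype.piFinset (Function.update s i {k}), F p := by
  classical
  rw [← sum_fiberwise_of_maps_to (g := fun p => p i) fun p hp => Fintype.mem_piFinset.1 hp i]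
  refine sum_congr rfl fun k hk => ?_
  rw [Fintype.piFinset_update_singleton_eq_filter_piFinset_eq s i hk]

lemma sum_piFinset_update_singleton_add_single [AddCommMonoid R] (s : ι → Finset ℕ) (i : ι)
    (k : ℕ) (F : (ι → ℕ) → R) :
    ∑ p ∈ Fintype.piFinset (Function.update s i {k}), F (p + Pi.single i 1) =
      ∑ p ∈ Fintype.piFinset (Function.update s i {k + 1}), F p := by
  refine sum_nbij' (· + Pi.single i 1) (· - Pi.single i 1) ?_ ?_ ?_ ?_ fun _ _ => rfl
  · intro p
    simp +contextual only [mem_piFinset_update_singleton, Pi.add_apply, Pi.single_eq_same, ne_eq,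
      not_false_eq_true, Pi.single_eq_of_ne, add_zero, implies_true, and_self]
  · intro p
    simp +contextual only [mem_piFinset_update_singleton, Pi.sub_apply, Pi.single_eq_same, ne_eq,
      not_false_eq_true, Pi.single_eq_of_ne, tsub_zero, add_tsub_cancel_right, implies_true,
      and_self]
  · exact fun p _ => add_tsub_cancel_right p _
  · intro p hp
    refine tsub_add_cancel_of_le fun j => ?_
    obtain rfl | hj := eq_or_ne j i
    · simp [(mem_piFinset_update_singleton.1 hp).1]
    · simp [hj]

lemma sum_piFinset_add_single_sub [AddCommGroup R] {s : ι → Finset ℕ} {i : ι} {n : ℕ}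
    (hs : s i = range n) (F : (ι → ℕ) → R) :
    ∑ p ∈ Fintype.piFinset s, (F (p + Pi.single i 1) - F p) =
      ∑ p ∈ Fintype.piFinset (Function.update s i {n}), F p -
        ∑ p ∈ Fintype.piFinset (Function.update s i {0}), F p := by
  rw [sum_piFinset_eq_sum_sum_update s i, hs]
  simp only [sum_sub_distrib, sum_piFinset_update_singleton_add_single]
  rw [← sum_sub_distrib, sum_range_sub fun k =>
    ∑ p ∈ Fintype.piFinset (Function.update s i {k}), F p]

end GridSums

/-- The sides of the grid of lowest vertices of the unit cubes tiling a face of the box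
`∏ i, [0, N i]`, namely the one on which every coordinate outside `S` is maximal. -/
def upperFaceSides (N : ι → ℕ) (S : Finset ι) : ι → Finset ℕ := fun j =>
  if j ∈ S then range (N j) else {N j}

lemma upperFaceSides_apply_of_mem {N : ι → ℕ} {S : Finset ι} {i : ι} (hi : i ∈ S) :
    upperFaceSides N S i = range (N i) :=
  if_pos hi

lemma apply_eq_of_mem_piFinset_upperFaceSides [Fintype ι] {N : ι → ℕ} {S : Finset ι} {i : ι}
    (hi : i ∉ S) {p : ι → ℕ} (hp : p ∈ Fintype.piFinset (upperFaceSides N S)) : p i = N i := by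
  simpa [upperFaceSides, hi] using Fintype.mem_piFinset.1 hp i

lemma update_upperFaceSides_singleton (N : ι → ℕ) (S : Finset ι) (i : ι) :
    Function.update (upperFaceSides N S) i {N i} = upperFaceSides N (S.erase i) := by
  funext j
  by_cases hj : j = i
  · subst hj
    simp [upperFaceSides]
  · simp [upperFaceSides, hj]

end Lattice

/-- Cubical cochains, of all degrees at once, on the lattice `ι → ℕ`: the cube with lowest vertex
`p` and edge directions `S` has degree `#S`. Cubes carry no orientation, since coefficients are
taken in characteristic two. -/
abbrev CubicalCochain (ι R : Type*) := (ι → ℕ) → Finset ι → R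

namespace CubicalCochain

variable {ι R : Type*} [DecidableEq ι]

/-- The cubical coboundary with signs omitted: the sum over the directions of a cube of the value
on the far face minus the value on the near face. -/
def coboundary [AddCommGroup R] (c : CubicalCochain ι R) : CubicalCochain ι R := fun p S =>
  ∑ i ∈ S, (c (p + Pi.single i 1) (S.erase i) - c p (S.erase i))

lemma coboundary_coboundary [Ring R] [CharP R 2] (c : CubicalCochain ι R) :
    coboundary (coboundary c) = 0 := by
  funext p S
  simp only [coboundary, ← sum_sub_distrib]
  refine sum_sum_erase_eq_zero_of_symm S _ fun i j => ?_
  rw [erase_right_comm, add_right_comm]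
  abel

lemma coboundary_mul [NonUnitalNonAssocRing R] (g : (ι → ℕ) → R) (c : CubicalCochain ι R)
    (p : ι → ℕ) (S : Finset ι) :
    coboundary (fun q T => g q * c q T) p S =
      ∑ i ∈ S, (g (p + Pi.single i 1) - g p) * c (p + Pi.single i 1) (S.erase i) +
        g p * coboundary c p S := by
  simp only [coboundary, mul_sum, ← sum_add_distrib]
  refine sum_congr rfl fun i _ => ?_
  rw [sub_mul, mul_sub, sub_add_sub_cancel]

section Cup

variable [Ring R]

/-- The cup product `dg₁ ⌣ ⋯ ⌣ dgₖ` of the coboundaries of functions on vertices, in the form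
`d(g₁ · d(g₂ ⋯ d(gₖ · 1)))`. The empty product is `1` on every cube and not only on vertices;
this does not matter, because the product of `k` factors is only evaluated on `k`-cubes. -/
def cupCoboundaries : List ((ι → ℕ) → R) → CubicalCochain ι R
  | [] => 1
  | g :: L => coboundary fun p S => g p * cupCoboundaries L p S

variable [CharP R 2]

lemma coboundary_cupCoboundaries (L : List ((ι → ℕ) → R)) :
    coboundary (cupCoboundaries L) = 0 := by
  cases L with
  | nil => funext p S; simp [cupCoboundaries, coboundary]
  | cons g L => exact coboundary_coboundary _

lemma cupCoboundaries_cons_apply (g : (ι → ℕ) → R) (L : List ((ι → ℕ) → R)) (p : ι → ℕ)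
    (S : Finset ι) :
    cupCoboundaries (g :: L) p S = ∑ i ∈ S,
      (g (p + Pi.single i 1) - g p) * cupCoboundaries L (p + Pi.single i 1) (S.erase i) := by
  rw [cupCoboundaries, coboundary_mul, coboundary_cupCoboundaries, Pi.zero_apply, Pi.zero_apply,
    mul_zero, add_zero]

lemma cupCoboundaries_eq_zero_of_const {L : List ((ι → ℕ) → R)} {g : (ι → ℕ) → R} {z : R}
    (hg : g ∈ L) {p : ι → ℕ} {S : Finset ι} (hz : ∀ u ∈ cubeVertices p S, g u = z) :
    cupCoboundaries L p S = 0 := by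
  induction L generalizing p S with
  | nil => cases hg
  | cons g' L ih =>
    rw [cupCoboundaries_cons_apply]
    refine sum_eq_zero fun i hi => ?_
    rcases List.mem_cons.1 hg with rfl | hgL
    · rw [hz _ (add_single_mem_cubeVertices hi), hz _ (self_mem_cubeVertices p S), sub_self,
        zero_mul]
    · rw [ih hgL fun u hu => hz u (cubeVertices_add_single_erase_subset hi hu), mul_zero]

lemma sum_mul_cupCoboundaries_eq_zero_of_const {L : List ((ι → ℕ) → R)} {g : (ι → ℕ) → R}
    (hg : g ∈ L) {T : Finset (ι → ℕ)} {S : Finset ι} {i : ι} {k : ℕ} {z : R} (hi : i ∉ S)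
    (hT : ∀ p ∈ T, p i = k) (hz : ∀ u, u i = k → g u = z) (h : (ι → ℕ) → R) :
    ∑ p ∈ T, h p * cupCoboundaries L p S = 0 := by
  refine sum_eq_zero fun p hp => ?_
  have hconst : ∀ u ∈ cubeVertices p S, g u = z := fun u hu =>
    hz u ((apply_eq_of_mem_cubeVertices hu hi).trans (hT p hp))
  rw [cupCoboundaries_eq_zero_of_const hg hconst, mul_zero]

end Cup

lemma sum_coboundary [Fintype ι] [AddCommGroup R] (N : ι → ℕ) (S : Finset ι)
    (c : CubicalCochain ι R) :
    ∑ p ∈ Fintype.piFinset (upperFaceSides N S), coboundary c p S =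
      ∑ i ∈ S, (∑ p ∈ Fintype.piFinset (upperFaceSides N (S.erase i)), c p (S.erase i) -
        ∑ p ∈ Fintype.piFinset (Function.update (upperFaceSides N S) i {0}),
          c p (S.erase i)) := by
  simp only [coboundary]
  rw [sum_comm]
  refine sum_congr rfl fun i hi => ?_
  rw [sum_piFinset_add_single_sub (upperFaceSides_apply_of_mem hi) fun p => c p (S.erase i),
    update_upperFaceSides_singleton]

lemma sum_cupCoboundaries_eq_one [Fintype ι] [Ring R] [CharP R 2] {N : ι → ℕ}
    {l : ι → (ι → ℕ) → R} (h0 : ∀ i p, p i = 0 → l i p = 0)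
    (hN : ∀ i p, p i = N i → l i p = 1) {L : List ι} (hL : L.Nodup) :
    ∑ p ∈ Fintype.piFinset (upperFaceSides N L.toFinset),
      cupCoboundaries (L.map l) p L.toFinset = 1 := by
  induction L with
  | nil => simp [cupCoboundaries, upperFaceSides]
  | cons a L ih =>
    obtain ⟨haL, hL⟩ := List.nodup_cons.1 hL
    set S := (a :: L).toFinset with hS
    have haS : a ∈ S := by simp [hS]
    have hSa : S.erase a = L.toFinset := by
      rw [hS, List.toFinset_cons, erase_insert (by simpa using haL)]
    have mem_map {i : ι} (hi : i ∈ S) (hia : i ≠ a) : l i ∈ L.map l :=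
      List.mem_map_of_mem (by simpa [hS, hia] using hi)
    have apply_upper {i : ι} : ∀ p ∈ Fintype.piFinset (upperFaceSides N (S.erase i)),
        p i = N i := fun p hp =>
      apply_eq_of_mem_piFinset_upperFaceSides (notMem_erase i S) hp
    have apply_lower {i : ι} : ∀ p ∈ Fintype.piFinset (Function.update (upperFaceSides N S) i {0}),
        p i = 0 := fun p hp =>
      (mem_piFinset_update_singleton.1 hp).1
    have lower_face : ∑ p ∈ Fintype.piFinset (Function.update (upperFaceSides N S) a {0}),
        l a p * cupCoboundaries (L.map l) p (S.erase a) = 0 :=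
      sum_eq_zero fun p hp => by rw [h0 a p (apply_lower p hp), zero_mul]
    have upper_face : ∑ p ∈ Fintype.piFinset (upperFaceSides N (S.erase a)),
        l a p * cupCoboundaries (L.map l) p (S.erase a) = 1 := by
      rw [← ih hL, ← hSa]
      exact sum_congr rfl fun p hp => by rw [hN a p (apply_upper p hp), one_mul]
    rw [List.map_cons, cupCoboundaries, sum_coboundary, sum_eq_single_of_mem a haS]
    · rw [upper_face, lower_face, sub_zero]
    · intro i hi hia
      have face_eq_zero {T : Finset (ι → ℕ)} {k : ℕ} {z : R} (hT : ∀ p ∈ T, p i = k)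
          (hz : ∀ u, u i = k → l i u = z) :
          ∑ p ∈ T, l a p * cupCoboundaries (L.map l) p (S.erase i) = 0 :=
        sum_mul_cupCoboundaries_eq_zero_of_const (mem_map hi hia) (notMem_erase i S) hT hz (l a)
      rw [face_eq_zero apply_upper (hN i), face_eq_zero apply_lower (h0 i), sub_zero]

end CubicalCochain

theorem discrete_poincare_miranda {ι : Type*} [Finite ι] {N : ι → ℕ}
    {P : ι → (ι → ℕ) → Prop} (h0 : ∀ i p, p i = 0 → ¬P i p) (hN : ∀ i p, p i = N i → P i p) :
    ∃ p : ι → ℕ, p + 1 ≤ N ∧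
      ∀ i, (∃ u ∈ Set.Icc p (p + 1), ¬P i u) ∧ ∃ v ∈ Set.Icc p (p + 1), P i v := by
  classical
  cases nonempty_fintype ι
  let l : ι → (ι → ℕ) → ZMod 2 := fun i p => if P i p then 1 else 0
  have hsum := CubicalCochain.sum_cupCoboundaries_eq_one (N := N) (l := l)
    (fun i p hp => if_neg (h0 i p hp)) (fun i p hp => if_pos (hN i p hp)) (nodup_toList univ)
  obtain ⟨p, hp, hcup⟩ := exists_ne_zero_of_sum_ne_zero (hsum.trans_ne one_ne_zero)
  rw [toList_toFinset] at hp hcup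
  have hconst (i : ι) (z : ZMod 2) : ¬∀ u ∈ Set.Icc p (p + 1), l i u = z := fun h =>
    hcup <| CubicalCochain.cupCoboundaries_eq_zero_of_const
      (List.mem_map_of_mem (mem_toList.2 (mem_univ i))) fun u hu =>
        h u (cubeVertices_univ p ▸ hu)
  refine ⟨p, fun j => ?_, fun i => ⟨?_, ?_⟩⟩
  · simpa [upperFaceSides] using Fintype.mem_piFinset.1 hp j
  · by_contra! h
    exact hconst i 1 fun u hu => if_pos (h u hu)
  · by_contra! h
    exact hconst i 0 fun u hu => if_neg (h u hu)

section Grid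

variable {ι : Type*} {a b : ι → ℝ} {n : ℕ} {p : ι → ℕ} {i : ι}

/-- The point with index `p` of the grid that divides each side of the box `[a, b]` into `n` equal
parts; the box itself corresponds to the indices with `p j ≤ n` for all `j`. -/
noncomputable def gridPoint (a b : ι → ℝ) (n : ℕ) (p : ι → ℕ) : ι → ℝ :=
  fun j => AffineMap.lineMap (a j) (b j) (p j / n : ℝ)

lemma gridPoint_apply_of_eq_zero (hp : p i = 0) : gridPoint a b n p i = a i := by
  simp [gridPoint, hp]

lemma gridPoint_apply_of_eq (hn : n ≠ 0) (hp : p i = n) : gridPoint a b n p i = b i := by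
  simp [gridPoint, hp, hn]

lemma gridPoint_mem_Icc (hab : a ≤ b) (hp : ∀ j, p j ≤ n) :
    gridPoint a b n p ∈ Set.Icc a b := by
  rw [← Set.pi_univ_Icc]
  intro j _
  refine (convex_Icc (a j) (b j)).lineMap_mem (Set.left_mem_Icc.2 (hab j))
    (Set.right_mem_Icc.2 (hab j)) ⟨by positivity, ?_⟩
  exact div_le_one_of_le₀ (by exact_mod_cast hp j) (by positivity)

lemma dist_gridPoint_le [Fintype ι] {u : ι → ℕ} (hu : u ∈ Set.Icc p (p + 1)) :
    dist (gridPoint a b n u) (gridPoint a b n p) ≤ dist a b / n := by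
  refine (dist_pi_le_iff (by positivity)).2 fun j => ?_
  have hle : (p j : ℝ) ≤ u j := by exact_mod_cast hu.1 j
  have hlt : (u j : ℝ) ≤ p j + 1 := by exact_mod_cast hu.2 j
  have hparam : dist (u j / n : ℝ) (p j / n) ≤ 1 / n := by
    rw [Real.dist_eq, ← sub_div, abs_of_nonneg (div_nonneg (sub_nonneg.2 hle) n.cast_nonneg)]
    gcongr
    linarith
  calc dist (gridPoint a b n u j) (gridPoint a b n p j)
      = dist (u j / n : ℝ) (p j / n) * dist (a j) (b j) := dist_lineMap_lineMap _ _ _ _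
    _ ≤ 1 / n * dist a b := by gcongr; exact dist_le_pi_dist a b j
    _ = dist a b / n := one_div_mul_eq_div _ _

end Grid

lemma exists_approx_solution_mem_Icc {ι Y : Type*} [Fintype ι] [LinearOrder Y] {a b : ι → ℝ}
    (hab : a ≤ b) {f : ι → (ι → ℝ) → Y} {c : ι → Y}
    (ha : ∀ i, ∀ x ∈ Set.Icc a b, x i = a i → f i x ≤ c i)
    (hb : ∀ i, ∀ x ∈ Set.Icc a b, x i = b i → c i ≤ f i x) {n : ℕ} (hn : n ≠ 0) :
    ∃ x ∈ Set.Icc a b, ∀ i,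
      (∃ u ∈ Set.Icc a b, dist u x ≤ dist a b / n ∧ f i u ≤ c i) ∧
        ∃ v ∈ Set.Icc a b, dist v x ≤ dist a b / n ∧ c i ≤ f i v := by
  obtain ⟨p, hpn, hp⟩ := discrete_poincare_miranda (N := fun _ : ι => n)
    (P := fun i q => q i ≠ 0 ∧ (q i = n ∨ c i < f i (gridPoint a b n q)))
    (fun _ _ hq h => h.1 hq) (fun i q hq => ⟨hq ▸ hn, Or.inl hq⟩)
  have mem_Icc {u : ι → ℕ} (hu : u ∈ Set.Icc p (p + 1)) : gridPoint a b n u ∈ Set.Icc a b :=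
    gridPoint_mem_Icc hab (hu.2.trans hpn)
  refine ⟨gridPoint a b n p, mem_Icc (Set.left_mem_Icc.2 le_self_add), fun i => ?_⟩
  obtain ⟨⟨u, hu, hPu⟩, v, hv, -, hPv⟩ := hp i
  refine ⟨⟨_, mem_Icc hu, dist_gridPoint_le hu, ?_⟩, _, mem_Icc hv, dist_gridPoint_le hv, ?_⟩
  · by_cases hui : u i = 0
    · exact ha i _ (mem_Icc hu) (gridPoint_apply_of_eq_zero hui)
    · exact not_lt.1 fun hlt => hPu ⟨hui, Or.inr hlt⟩
  · exact hPv.elim (fun hvi => hb i _ (mem_Icc hv) (gridPoint_apply_of_eq hn hvi)) le_of_lt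

lemma tendsto_comp_of_dist_le {α X Y : Type*} [PseudoMetricSpace X] [TopologicalSpace Y]
    {K : Set X} {f : X → Y} {y : X} (hf : ContinuousWithinAt f K y) {F : Filter α} {x w : α → X}
    {ε : α → ℝ} (hx : Tendsto x F (𝓝 y)) (hε : Tendsto ε F (𝓝 0)) (hw : ∀ t, w t ∈ K)
    (hwx : ∀ t, dist (w t) (x t) ≤ ε t) : Tendsto (f ∘ w) F (𝓝 (f y)) := by
  have hwy : Tendsto w F (𝓝 y) :=
    (tendsto_iff_of_dist (squeeze_zero (fun _ => dist_nonneg) hwx hε)).2 hx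
  exact hf.tendsto.comp (tendsto_nhdsWithin_iff.2 ⟨hwy, Eventually.of_forall hw⟩)

lemma exists_mem_forall_eq_of_approx {ι X Y : Type*} [PseudoMetricSpace X] [TopologicalSpace Y]
    [PartialOrder Y] [OrderClosedTopology Y] {K : Set X} (hK : IsCompact K) {f : ι → X → Y}
    (hf : ∀ i, ContinuousOn (f i) K) {c : ι → Y} {ε : ℕ → ℝ} (hε : Tendsto ε atTop (𝓝 0))
    (happrox : ∀ n, ∃ x ∈ K, ∀ i, (∃ u ∈ K, dist u x ≤ ε n ∧ f i u ≤ c i) ∧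
      ∃ v ∈ K, dist v x ≤ ε n ∧ c i ≤ f i v) :
    ∃ x ∈ K, ∀ i, f i x = c i := by
  choose x hxK happrox using happrox
  choose u huK hux hu using fun n i => (happrox n i).1
  choose v hvK hvx hv using fun n i => (happrox n i).2
  obtain ⟨y, hyK, φ, hφ, hxy⟩ := hK.tendsto_subseq hxK
  have hεφ : Tendsto (ε ∘ φ) atTop (𝓝 0) := hε.comp hφ.tendsto_atTop
  refine ⟨y, hyK, fun i => le_antisymm ?_ ?_⟩
  · exact le_of_tendsto' (tendsto_comp_of_dist_le (hf i y hyK) hxy hεφ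
      (fun k => huK (φ k) i) fun k => hux (φ k) i) fun k => hu (φ k) i
  · exact ge_of_tendsto' (tendsto_comp_of_dist_le (hf i y hyK) hxy hεφ
      (fun k => hvK (φ k) i) fun k => hvx (φ k) i) fun k => hv (φ k) i

theorem stmt17_general {ι Y : Type*} [Finite ι] [TopologicalSpace Y] [LinearOrder Y]
    [OrderClosedTopology Y] {a b : ι → ℝ} (hab : a ≤ b) {f : ι → (ι → ℝ) → Y} {c : ι → Y}
    (hf : ∀ i, ContinuousOn (f i) (Set.Icc a b))
    (ha : ∀ i, ∀ x ∈ Set.Icc a b, x i = a i → f i x ≤ c i)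
    (hb : ∀ i, ∀ x ∈ Set.Icc a b, x i = b i → c i ≤ f i x) :
    ∃ x ∈ Set.Icc a b, ∀ i, f i x = c i := by
  cases nonempty_fintype ι
  have hmesh : Tendsto (fun n : ℕ => dist a b / (n + 1 : ℕ)) atTop (𝓝 0) :=
    (tendsto_const_div_atTop_nhds_zero_nat (dist a b)).comp (tendsto_add_atTop_nat 1)
  exact exists_mem_forall_eq_of_approx isCompact_Icc hf hmesh fun n =>
    exists_approx_solution_mem_Icc hab ha hb n.succ_ne_zero

/-- Poincaré–Miranda theorem: if `f_1, …, f_r : [0,1]^r → ℝ` are continuous and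
for each `i`, `f_i ≤ 0` on the face `x_i = 0` and `f_i ≥ 0` on the face
`x_i = 1`, then the `f_i` have a common zero in `[0,1]^r`. -/
theorem stmt17 (r : ℕ) (f : Fin r → (Fin r → ℝ) → ℝ)
    (hcont : ∀ i, ContinuousOn (f i) (Set.Icc (0 : Fin r → ℝ) 1))
    (h0 : ∀ i, ∀ x ∈ Set.Icc (0 : Fin r → ℝ) 1, x i = 0 → f i x ≤ 0)
    (h1 : ∀ i, ∀ x ∈ Set.Icc (0 : Fin r → ℝ) 1, x i = 1 → 0 ≤ f i x) :
    ∃ x ∈ Set.Icc (0 : Fin r → ℝ) 1, ∀ i, f i x = 0 :=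
  stmt17_general (c := fun _ => 0) zero_le_one hcont h0 h1
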